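/- arXiv:2207.14152 — 2 statements merged into one kernel-verified Lean document; each statement's English description precedes it below -/
import Mathlib

section
/- Let P be the Borel probability measure on ℝ with density f given by f(x) = 1/2 for x ∈ [0, 1/2] ∪ [1, 3/2], f(x) = 1 for x ∈ (1/2, 1), and f(x) = 0 otherwise. Then the set { (3 − √2)/8, 3(3 − √2)/8, 3(1 + √2)/8, (9 + √2)/8 } ≈ {0.198223, 0.594670, 0.905330, 1.301777} is an optimal set of four-means for P, and the fourth quantization error is V₄(P) = (19 − 12√2)/192 ≈ 0.01057. -/
open MeasureTheory Set

/-- Distortion error of a set `α` with respect to the measure `Q`. -/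
noncomputable def distortion (Q : Measure ℝ) (α : Set ℝ) : ℝ :=
  ∫ x, sInf ((fun a => (x - a) ^ 2) '' α) ∂Q

/-- The `n`-th quantization error of the measure `Q`. -/
noncomputable def quantErr (Q : Measure ℝ) (n : ℕ) : ℝ :=
  sInf { v : ℝ | ∃ α : Set ℝ, α.Finite ∧ α.Nonempty ∧ α.ncard ≤ n ∧ v = distortion Q α }

/-- `α` is an optimal set of `n`-means for `Q`. -/
def IsOptimal (Q : Measure ℝ) (n : ℕ) (α : Set ℝ) : Prop :=
  α.Finite ∧ 1 ≤ α.ncard ∧ α.ncard ≤ n ∧ distortion Q α = quantErr Q n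

/-- The density of the mixed distribution `P = (1/2) P₁ + (1/2) P₂`. -/
noncomputable def f2 (x : ℝ) : ℝ :=
  if x ∈ Icc (0 : ℝ) (1 / 2) ∪ Icc (1 : ℝ) (3 / 2) then 1 / 2
  else if x ∈ Ioo (1 / 2 : ℝ) 1 then 1
  else 0

/-- The mixed distribution `P = (1/2) P₁ + (1/2) P₂`. -/
noncomputable def P2 : Measure ℝ :=
  volume.withDensity fun x => ENNReal.ofReal (f2 x)

lemma poly (q r s : ℝ) (hq : q^2=2) (h1: 1.414<q) (h2 : q<1.4143) (hr:0 ≤ r) (hs:0 < s) :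
  0 ≤ (8-12*r+6*r^2+2*s^3-76+48*q-54*(3-2*q)*(s-1))+6*(r*s*(r+s)^2/(r+2*s)) := by
  have h : s*((2*q-2)*r^2+(6*q-8)*r*s) ≤ r*s*(r+s)^2/(r+2*s) := by
    rw [le_div_iff₀ (by positivity)]
    have : r*s*(r+s)^2 - s*((2*q-2)*r^2+(6*q-8)*r*s)*(r+2*s) = r*s*((3-2*q)*(r-(q-1)*s)^2) := by
      linear_combination (r*s*(2*q-7)*s^2 + r*s*(-4)*r*s)*hq
    have : 0 ≤ r*s*((3-2*q)*(r-(q-1)*s)^2) := by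
      have : 0 ≤ 3-2*q := by linarith
      positivity
    linarith
  have hC : 0 < 6+6*(2*q-2)*s := by
    have : 0 ≤ (2*q-2)*s := mul_nonneg (by linarith) hs.le
    linarith
  have hD : 4*(6+6*(2*q-2)*s)*(2*s^3 -54*(3-2*q)*(s-1)-68+48*q) - (6*(6*q-8)*s^2-12)^2 = (s-1)^2*((3552*q-4992)*s^2+(7104*q-9936)*s+(2112-1440*q)) := by
    linear_combination (5184*s^2-2880*s-1296*s^4)*hq
  have hD' : 0 ≤ (s-1)^2*((3552*q-4992)*s^2+(7104*q-9936)*s+(2112-1440*q)) := by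
    have : 0 ≤ 3552*q-4992 := by linarith
    have : 0 ≤ 7104*q-9936 := by linarith
    have : 0 ≤ 2112-1440*q := by linarith
    positivity
  have key : 0 ≤ (6+6*(2*q-2)*s)*r^2+(6*(6*q-8)*s^2-12)*r+(2*s^3 -54*(3-2*q)*(s-1)-68+48*q) := by
    by_contra hn
    push Not at hn
    nlinarith [mul_pos hC (neg_pos.2 hn), sq_nonneg (2*(6+6*(2*q-2)*s)*r+(6*(6*q-8)*s^2-12))]
  linarith

lemma caseD (q v w : ℝ) (h1 : 1.414 < q) (h2 : q < 1.4143) (hr : 0 ≤ v) (hs : 0 ≤ w) :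
    (19-12*q)/384+9*(3-2*q)/64*(v+w-1/4)
      ≤ 1/192+v^3/12+v*(1/2+v)^2/(4*(1+4*v))+w^3/12 := by
  have : v/16 ≤ v*(1/2+v)^2/(4*(1+4*v)) := by
    rw [div_le_div_iff₀ (by norm_num) (by positivity)]
    nlinarith [mul_nonneg hr hr, mul_nonneg hr (mul_nonneg hr hr)]
  have : 0 ≤ v^3 := by positivity
  nlinarith [mul_nonneg (add_nonneg hs (by norm_num : (0:ℝ) ≤ 0.6)) (sq_nonneg (w-0.3)),
    mul_nonneg hr (sub_nonneg.2 h1.le), mul_nonneg hs (sub_nonneg.2 h1.le)]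

lemma caseB (q u v : ℝ) (hq : q^2=2) (h1 : 1.414 < q) (h2 : q < 1.4143)
    (hr : 0 ≤ u) (hs : 0 ≤ v) :
    (19-12*q)/384+9*(3-2*q)/64*(v-1/4)
      ≤ (1/2-u)^3/24+u^3/24+v^3/12+u*v*(u+v)^2/(4*(u+2*v)) := by
  rcases hs.eq_or_lt with rfl | hs
  · simp only [mul_zero, zero_mul, zero_div]
    nlinarith [sq_nonneg (u-1/4)]
  have := poly q (4*u) (4*v) hq h1 h2 (by positivity) (by positivity)
  have e : 4*u*(4*v)*(4*u+4*v)^2/(4*u+2*(4*v)) = 256*(u*v*(u+v)^2/(4*(u+2*v))) := by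
    field_simp
    ring
  rw [e] at this
  linarith

lemma f2_meas : Measurable f2 := by
  unfold f2
  refine Measurable.ite ?_ measurable_const (Measurable.ite ?_ measurable_const measurable_const)
  · exact measurableSet_Icc.union measurableSet_Icc
  · exact measurableSet_Ioo

lemma f2_nonneg (x : ℝ) : 0 ≤ f2 x := by
  unfold f2; split_ifs <;> norm_num

lemma f2_le (x : ℝ) : f2 x ≤ 1 := by
  unfold f2; split_ifs <;> norm_num

lemma f2_symm (x : ℝ) : f2 (3/2 - x) = f2 x := by
  unfold f2
  simp only [mem_union, mem_Icc, mem_Ioo]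
  congr 1
  · apply propext; constructor <;> rintro (⟨h, h'⟩ | ⟨h, h'⟩)
    · right; constructor <;> linarith
    · left; constructor <;> linarith
    · right; constructor <;> linarith
    · left; constructor <;> linarith
  · congr 1
    apply propext; constructor <;> rintro ⟨h, h'⟩ <;> constructor <;> linarith

lemma f2_int (a b : ℝ) : IntervalIntegrable f2 volume a b := by
  refine (intervalIntegrable_const (c := (1:ℝ))).mono_fun f2_meas.aestronglyMeasurable ?_
  filter_upwards with x
  rw [Real.norm_of_nonneg (f2_nonneg x)]
  simpa using f2_le x

lemma f2g_int {g : ℝ → ℝ} (hg : Continuous g) (a b : ℝ) :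
    IntervalIntegrable (fun x => f2 x * g x) volume a b :=
  (f2_int a b).mul_continuousOn hg.continuousOn

lemma P2_integral (g : ℝ → ℝ) : ∫ x, g x ∂P2 = ∫ x in (0:ℝ)..(3/2), f2 x * g x := by
  unfold P2
  rw [integral_withDensity_eq_integral_toReal_smul f2_meas.ennreal_ofReal (by simp)]
  rw [intervalIntegral.integral_of_le (by norm_num), ← integral_Icc_eq_integral_Ioc]
  rw [setIntegral_eq_integral_of_forall_compl_eq_zero]
  · refine integral_congr_ae ?_
    filter_upwards with x
    simp [ENNReal.toReal_ofReal (f2_nonneg x)]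
  · intro x hx
    have : f2 x = 0 := by
      unfold f2
      rw [if_neg, if_neg]
      · rintro ⟨h, h'⟩; apply hx; constructor <;> linarith
      · rintro (⟨h, h'⟩ | ⟨h, h'⟩) <;> apply hx <;> constructor <;> linarith
    simp [this]

lemma int_sq (s t a : ℝ) : ∫ x in s..t, (x - a)^2 = ((t-a)^3-(s-a)^3)/3 := by
  rw [intervalIntegral.integral_comp_sub_right (fun x => x^2) a, integral_pow]
  norm_num

lemma piece1 (s t a : ℝ) (h0 : 0 ≤ s) (hst : s ≤ t) (h1 : t ≤ 1/2) :
    ∫ x in s..t, f2 x * (x - a)^2 = ((t-a)^3-(s-a)^3)/6 := by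
  have : ∫ x in s..t, f2 x * (x - a)^2 = ∫ x in s..t, (1/2) * (x - a)^2 := by
    apply intervalIntegral.integral_congr
    intro x hx
    rw [uIcc_of_le hst] at hx
    have : f2 x = 1/2 := by
      unfold f2
      rw [if_pos]
      left; exact ⟨h0.trans hx.1, hx.2.trans h1⟩
    simp only [this]
  rw [this, intervalIntegral.integral_const_mul, int_sq]
  ring

lemma piece2 (s t a : ℝ) (h0 : 1/2 ≤ s) (hst : s ≤ t) (h1 : t ≤ 1) :
    ∫ x in s..t, f2 x * (x - a)^2 = ((t-a)^3-(s-a)^3)/3 := by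
  rw [← int_sq]
  rw [intervalIntegral.integral_of_le hst, intervalIntegral.integral_of_le hst,
    integral_Ioc_eq_integral_Ioo, integral_Ioc_eq_integral_Ioo]
  apply setIntegral_congr_fun measurableSet_Ioo
  intro x hx
  have : f2 x = 1 := by
    unfold f2
    rw [if_neg, if_pos]
    · exact ⟨h0.trans_lt hx.1, hx.2.trans_le h1⟩
    · rintro (⟨h, h'⟩ | ⟨h, h'⟩)
      · linarith [hx.1]
      · linarith [hx.2]
  simp only [this, one_mul]

lemma mono_int {g h : ℝ → ℝ} (hg : Continuous g) (hh : Continuous h) {s t : ℝ} (hst : s ≤ t)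
    (H : ∀ x, s < x → x < t → g x ≤ h x) :
    ∫ x in s..t, f2 x * g x ≤ ∫ x in s..t, f2 x * h x := by
  refine intervalIntegral.integral_mono_on_of_le_Ioo hst (f2g_int hg s t) (f2g_int hh s t) ?_
  intro x hx
  exact mul_le_mul_of_nonneg_left (H x hx.1 hx.2) (f2_nonneg x)

lemma split_int {g : ℝ → ℝ} (hg : Continuous g) (s m t : ℝ) :
    ∫ x in s..t, f2 x * g x = (∫ x in s..m, f2 x * g x) + ∫ x in m..t, f2 x * g x :=
  (intervalIntegral.integral_add_adjacent_intervals (f2g_int hg s m) (f2g_int hg m t)).symm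

lemma nonneg_int {g : ℝ → ℝ} (hg : ∀ x, 0 ≤ g x) {s t : ℝ} (hst : s ≤ t) :
    0 ≤ ∫ x in s..t, f2 x * g x :=
  intervalIntegral.integral_nonneg hst fun x _ => mul_nonneg (f2_nonneg x) (hg x)

lemma reflect (g : ℝ → ℝ) (s t : ℝ) :
    ∫ x in s..t, f2 x * g x = ∫ x in (3/2-t)..(3/2-s), f2 x * g (3/2 - x) := by
  rw [← intervalIntegral.integral_comp_sub_left (fun x => f2 x * g (3/2 - x)) (3/2)]
  apply intervalIntegral.integral_congr
  intro x _
  simp only [f2_symm]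
  congr 2; ring

lemma weighted (p k X Y : ℝ) (h : 0 ≤ p) (hk : 0 ≤ k) :
    p*k*(X-Y)^2/(p+k) ≤ p*X^2+k*Y^2 := by
  rcases (add_nonneg h hk).eq_or_lt with h0 | h0
  · rw [← h0]; simp; positivity
  rw [div_le_iff₀ h0]
  nlinarith [sq_nonneg (p*X+k*Y)]

lemma sqrt_facts : (Real.sqrt 2)^2 = 2 ∧ 1.414 < Real.sqrt 2 ∧ Real.sqrt 2 < 1.4143 := by
  refine ⟨Real.sq_sqrt (by norm_num), ?_, ?_⟩
  · rw [Real.lt_sqrt (by norm_num)]; norm_num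
  · rw [Real.sqrt_lt' (by norm_num)]; norm_num

/-- Lower bound in terms of the split point. -/
lemma two_cell (q b t m a : ℝ) (hq : q^2=2) (h1 : 1.414 < q) (h2 : q < 1.4143)
    (hm0 : 0 ≤ m) (hmt : m ≤ t) (ht : 1/2 ≤ t) (ht1 : t ≤ 1) :
    (19-12*q)/384+9*(3-2*q)/64*(t-3/4) ≤
      (∫ x in (0:ℝ)..m, f2 x * (x - a)^2) + ∫ x in m..t, f2 x * (x - b)^2 := by
  have hc (a : ℝ) : Continuous fun x : ℝ => (x - a)^2 := by fun_prop
  rcases le_total m (1/2) with hm | hm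
  · rw [piece1 0 m a le_rfl hm0 hm, split_int (hc b) m (1/2) t, piece1 m (1/2) b hm0 hm le_rfl,
      piece2 (1/2) t b le_rfl ht ht1]
    have hB := caseB q (1/2-m) (t-1/2) hq h1 h2 (by linarith) (by linarith)
    have hw := weighted ((1/2-m)/2) (t-1/2) ((1/2-m)/2+(b-1/2)) ((b-1/2)-(t-1/2)/2)
      (by linarith) (by linarith)
    have e : (1/2-m)/2*(t-1/2)*(((1/2-m)/2+(b-1/2))-((b-1/2)-(t-1/2)/2))^2/((1/2-m)/2+(t-1/2))
        = (1/2-m)*(t-1/2)*((1/2-m)+(t-1/2))^2/(4*((1/2-m)+2*(t-1/2))) := by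
      rcases (show 0 ≤ (1/2-m)+2*(t-1/2) by linarith).eq_or_lt with h0 | h0
      · have : (1/2-m)/2+(t-1/2) = 0 := by linarith
        rw [this, ← h0]; simp
      · have : (1/2-m)/2+(t-1/2) = ((1/2-m)+2*(t-1/2))/2 := by ring
        rw [this, div_eq_div_iff (by positivity) (by positivity)]
        ring
    rw [e] at hw
    have : 0 ≤ m * (a - m/2)^2 := by positivity
    linarith
  · rw [split_int (hc a) 0 (1/2) m, piece1 0 (1/2) a le_rfl (by norm_num) le_rfl,
      piece2 (1/2) m a le_rfl hm (by linarith), piece2 m t b hm hmt ht1]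
    have hD := caseD q (m-1/2) (t-m) h1 h2 (by linarith) (by linarith)
    have hw := weighted (1/4) (m-1/2) (1/4+(a-1/2)) ((a-1/2)-(m-1/2)/2)
      (by norm_num) (by linarith)
    have e : 1/4*(m-1/2)*((1/4+(a-1/2))-((a-1/2)-(m-1/2)/2))^2/(1/4+(m-1/2))
        = (m-1/2)*(1/2+(m-1/2))^2/(4*(1+4*(m-1/2))) := by
      have h0 : 0 < 1/4+(m-1/2) := by linarith
      have h3 : 0 < 1+4*(m-1/2) := by linarith
      rw [div_eq_div_iff (by positivity) (by positivity)]
      ring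
    rw [e] at hw
    have : 0 ≤ (t-m) * (b - (t+m)/2)^2 := by
      have : 0 ≤ t - m := by linarith
      positivity
    linarith

lemma half (a b t : ℝ) (hab : a ≤ b) (ht0 : 0 ≤ t) (ht1 : t ≤ 1) :
    (19-12*Real.sqrt 2)/384+9*(3-2*Real.sqrt 2)/64*(t-3/4) ≤
      ∫ x in (0:ℝ)..t, f2 x * min ((x - a)^2) ((x-b)^2) := by
  obtain ⟨hq, h1, h2⟩ := sqrt_facts
  set q := Real.sqrt 2
  have hc (a : ℝ) : Continuous fun x : ℝ => (x - a)^2 := by fun_prop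
  have hcm : Continuous fun x : ℝ => min ((x - a)^2) ((x-b)^2) := by fun_prop
  rcases le_total t (1/2) with ht | ht
  · have : 0 ≤ ∫ x in (0:ℝ)..t, f2 x * min ((x - a)^2) ((x-b)^2) :=
      nonneg_int (fun x => by positivity) ht0
    nlinarith
  have hm0 : 0 ≤ max 0 (min t ((a+b)/2)) := le_max_left _ _
  have hmt : max 0 (min t ((a+b)/2)) ≤ t := max_le ht0 (min_le_left _ _)
  have hL : ∀ x, 0 < x → x < max 0 (min t ((a+b)/2)) → x ≤ (a+b)/2 := by
    intro x h0 h
    rcases lt_max_iff.1 h with h | h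
    · linarith
    · exact (lt_min_iff.1 h).2.le
  have hR : ∀ x, max 0 (min t ((a+b)/2)) < x → x < t → (a+b)/2 ≤ x := by
    intro x h0 h
    rcases min_lt_iff.1 (max_lt_iff.1 h0).2 with h | h <;> linarith
  set m := max 0 (min t ((a+b)/2))
  refine (two_cell q b t m a hq h1 h2 hm0 hmt ht ht1).trans ?_
  rw [split_int hcm 0 m t]
  refine add_le_add (mono_int (hc a) hcm hm0 ?_) (mono_int (hc b) hcm hmt ?_)
  · intro x h0 h
    have := hL x h0 h
    exact le_min le_rfl (by nlinarith)
  · intro x h0 h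
    have := hR x h0 h
    exact le_min (by nlinarith) le_rfl

lemma lower (a b c d : ℝ) (hab : a ≤ b) (hbc : b ≤ c) (hcd : c ≤ d) :
    (19-12*Real.sqrt 2)/192 ≤ ∫ x in (0:ℝ)..(3/2), f2 x *
      min (min ((x - a)^2) ((x-b)^2)) (min ((x - c)^2) ((x-d)^2)) := by
  have hc1 : Continuous fun x : ℝ => min ((x - a)^2) ((x-b)^2) := by fun_prop
  have hc2 : Continuous fun x : ℝ => min ((x - c)^2) ((x-d)^2) := by fun_prop
  have hcm : Continuous fun x : ℝ =>
    min (min ((x - a)^2) ((x-b)^2)) (min ((x - c)^2) ((x-d)^2)) := by fun_prop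
  have ht0 : 0 ≤ max 0 (min (3/2) ((b+c)/2)) := le_max_left _ _
  have ht1 : max 0 (min (3/2) ((b+c)/2)) ≤ 3/2 := max_le (by norm_num) (min_le_left _ _)
  have hL : ∀ x, 0 < x → x < max 0 (min (3/2) ((b+c)/2)) → x ≤ (b+c)/2 := by
    intro x h0 h
    rcases lt_max_iff.1 h with h | h
    · linarith
    · exact (lt_min_iff.1 h).2.le
  have hR : ∀ x, max 0 (min (3/2) ((b+c)/2)) < x → x < 3/2 → (b+c)/2 ≤ x := by
    intro x h0 h
    rcases min_lt_iff.1 (max_lt_iff.1 h0).2 with h | h <;> linarith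
  set t := max 0 (min (3/2) ((b+c)/2))
  have A : (∫ x in (0:ℝ)..t, f2 x * min ((x - a)^2) ((x-b)^2)) +
      (∫ x in t..(3/2), f2 x * min ((x - c)^2) ((x-d)^2)) ≤ ∫ x in (0:ℝ)..(3/2), f2 x *
      min (min ((x - a)^2) ((x-b)^2)) (min ((x - c)^2) ((x-d)^2)) := by
    rw [split_int hcm 0 t (3/2)]
    refine add_le_add (mono_int hc1 hcm ht0 ?_) (mono_int hc2 hcm ht1 ?_)
    · intro x h0 h
      have := hL x h0 h
      refine le_min le_rfl (le_min ?_ ?_) <;> refine (min_le_right _ _).trans ?_ <;> nlinarith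
    · intro x h0 h
      have := hR x h0 h
      refine le_min (le_min ?_ ?_) le_rfl <;> refine (min_le_left _ _).trans ?_ <;> nlinarith
  refine le_trans ?_ A
  have e : (∫ x in t..(3/2), f2 x * min ((x - c)^2) ((x-d)^2)) =
      ∫ x in (0:ℝ)..(3/2-t), f2 x * min ((x - (3/2-d))^2) ((x-(3/2-c))^2) := by
    rw [reflect]
    norm_num only [sub_self]
    apply intervalIntegral.integral_congr
    intro x _
    simp only
    rw [min_comm]
    congr 2 <;> ring
  rw [e]
  obtain ⟨hq, h1, h2⟩ := sqrt_facts
  have hp1 : ∀ x : ℝ, 0 ≤ min ((x - a)^2) ((x-b)^2) := fun x => by positivity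
  have hp2 : ∀ x : ℝ, 0 ≤ min ((x - (3/2-d))^2) ((x-(3/2-c))^2) := fun x => by positivity
  have hc3 : Continuous fun x : ℝ => min ((x - (3/2-d))^2) ((x-(3/2-c))^2) := by fun_prop
  rcases le_total t 1 with h | h
  · rcases le_total (1/2) t with h' | h'
    · have B1 := half a b t hab ht0 h
      have B2 := half (3/2-d) (3/2-c) (3/2-t) (by linarith) (by linarith) (by linarith)
      linarith
    · have B1 := nonneg_int hp1 ht0
      have B2 := half (3/2-d) (3/2-c) 1 (by linarith) (by linarith) (by linarith)
      have B3 := nonneg_int hp2 (show (1:ℝ) ≤ 3/2-t by linarith)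
      rw [split_int hc3 0 1 (3/2-t)]
      linarith
  · have B1 := half a b 1 hab (by linarith) le_rfl
    have B2 := nonneg_int hp1 h
    have B3 := nonneg_int hp2 (show 0 ≤ 3/2-t by linarith)
    rw [split_int hc1 0 1 t]
    linarith

lemma upper_half (g : ℝ → ℝ) (hg : Continuous g)
    (H1 : ∀ x, g x ≤ (x - (3 - Real.sqrt 2) / 8)^2)
    (H2 : ∀ x, g x ≤ (x - 3 * (3 - Real.sqrt 2) / 8)^2) :
    ∫ x in (0:ℝ)..(3/4), f2 x * g x ≤ (19-12*Real.sqrt 2)/384 := by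
  obtain ⟨hq, h1, h2⟩ := sqrt_facts
  set q := Real.sqrt 2
  have hc (a : ℝ) : Continuous fun x : ℝ => (x - a)^2 := by fun_prop
  rw [split_int hg 0 ((3-q)/4) (3/4)]
  have A := mono_int hg (hc ((3-q)/8)) (show 0 ≤ (3-q)/4 by linarith) (fun x _ _ => H1 x)
  have B := mono_int hg (hc (3*(3-q)/8)) (show (3-q)/4 ≤ 3/4 by linarith) (fun x _ _ => H2 x)
  rw [piece1 _ _ _ le_rfl (by linarith) (by linarith)] at A
  rw [split_int (hc _) _ (1/2) _, piece1 _ _ _ (by linarith) (by linarith) le_rfl,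
    piece2 _ _ _ le_rfl (by norm_num) (by norm_num)] at B
  have e3 : q^3 = 2*q := by rw [pow_succ, hq]
  refine (add_le_add A B).trans (le_of_eq ?_)
  ring_nf
  rw [e3]
  ring

lemma dist_four (a b c d : ℝ) : distortion P2 {a, b, c, d} =
    ∫ x in (0:ℝ)..(3/2), f2 x *
      min (min ((x - a)^2) ((x-b)^2)) (min ((x - c)^2) ((x-d)^2)) := by
  unfold distortion
  rw [P2_integral]
  congr 1
  ext x
  congr 1
  simp only [image_insert_eq, image_singleton]
  refine IsLeast.csInf_eq ⟨?_, ?_⟩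
  · simp only [mem_insert_iff, mem_singleton_iff]
    grind
  · rintro y hy
    simp only [mem_insert_iff, mem_singleton_iff] at hy
    rcases hy with rfl | rfl | rfl | rfl <;> simp

lemma four_points (α : Set ℝ) (hf : α.Finite) (hn : α.Nonempty) (hc : α.ncard ≤ 4) :
    ∃ a b c d : ℝ, a ≤ b ∧ b ≤ c ∧ c ≤ d ∧ α = {a, b, c, d} := by
  have : Finite α := hf
  have : Nonempty α := hn.to_subtype
  have : Fintype α := Fintype.ofFinite α
  have hcard : Fintype.card α ≤ Fintype.card (Fin 4) := by
    rw [← Nat.card_eq_fintype_card, Fintype.card_fin]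
    exact hc
  obtain ⟨e⟩ := Function.Embedding.nonempty_of_card_le hcard
  let F : Fin 4 → ℝ := fun i => (Function.invFun e i : α)
  have hF : range F = α := by
    ext y
    constructor
    · rintro ⟨i, rfl⟩; exact Subtype.coe_prop _
    · intro hy
      exact ⟨e ⟨y, hy⟩, by simp [F, Function.leftInverse_invFun e.injective _]⟩
  have hmono := Tuple.monotone_sort F
  set K : Fin 4 → ℝ := F ∘ Tuple.sort F with hK
  have hrK : range K = α := by
    rw [hK, (Tuple.sort F).surjective.range_comp, hF]
  refine ⟨K 0, K 1, K 2, K 3, hmono (by decide), hmono (by decide), hmono (by decide), ?_⟩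
  rw [← hrK]
  ext y
  simp only [mem_range, Fin.exists_fin_succ, mem_insert_iff, mem_singleton_iff]
  simp [eq_comm]

theorem stmt_7 :
    IsOptimal P2 4
      {(3 - Real.sqrt 2) / 8, 3 * (3 - Real.sqrt 2) / 8,
        3 * (1 + Real.sqrt 2) / 8, (9 + Real.sqrt 2) / 8} ∧
    quantErr P2 4 = (19 - 12 * Real.sqrt 2) / 192 := by
  have hcard : ({(3 - Real.sqrt 2) / 8, 3 * (3 - Real.sqrt 2) / 8,
        3 * (1 + Real.sqrt 2) / 8, (9 + Real.sqrt 2) / 8} : Set ℝ).ncard ≤ 4 := by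
    refine (ncard_insert_le _ _).trans (Nat.succ_le_succ ?_)
    refine (ncard_insert_le _ _).trans (Nat.succ_le_succ ?_)
    refine (ncard_insert_le _ _).trans (Nat.succ_le_succ ?_)
    simp
  have hfin : ({(3 - Real.sqrt 2) / 8, 3 * (3 - Real.sqrt 2) / 8,
        3 * (1 + Real.sqrt 2) / 8, (9 + Real.sqrt 2) / 8} : Set ℝ).Finite := by simp
  have hne : ({(3 - Real.sqrt 2) / 8, 3 * (3 - Real.sqrt 2) / 8,
        3 * (1 + Real.sqrt 2) / 8, (9 + Real.sqrt 2) / 8} : Set ℝ).Nonempty := by simp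
  have hd : distortion P2 {(3 - Real.sqrt 2) / 8, 3 * (3 - Real.sqrt 2) / 8,
        3 * (1 + Real.sqrt 2) / 8, (9 + Real.sqrt 2) / 8} = (19 - 12 * Real.sqrt 2) / 192 := by
    rw [dist_four]
    obtain ⟨hq, h1, h2⟩ := sqrt_facts
    apply le_antisymm
    · have hcm : Continuous fun x : ℝ => min (min ((x - (3 - Real.sqrt 2) / 8)^2)
        ((x-3 * (3 - Real.sqrt 2) / 8)^2)) (min ((x - 3 * (1 + Real.sqrt 2) / 8)^2)
        ((x-(9 + Real.sqrt 2) / 8)^2)) := by fun_prop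
      rw [split_int hcm 0 (3/4) (3/2), reflect _ (3/4) (3/2)]
      have A := upper_half _ hcm (fun x => (min_le_left _ _).trans (min_le_left _ _))
        (fun x => (min_le_left _ _).trans (min_le_right _ _))
      have B := upper_half _ (hcm.comp (by fun_prop : Continuous fun x : ℝ => (3/2 : ℝ) - x))
        (fun x => ((min_le_right _ _).trans (min_le_right _ _)).trans (le_of_eq (by ring)))
        (fun x => ((min_le_right _ _).trans (min_le_left _ _)).trans (le_of_eq (by ring)))
      simp only [Function.comp_def] at B
      norm_num only [] at A B ⊢
      linarith
    · apply lower <;> linarith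
  have hq : quantErr P2 4 = (19 - 12 * Real.sqrt 2) / 192 := by
    unfold quantErr
    refine IsLeast.csInf_eq ⟨⟨_, hfin, hne, hcard, hd.symm⟩, ?_⟩
    rintro v ⟨α, hf, hn, hc, rfl⟩
    obtain ⟨a, b, c, d, hab, hbc, hcd, rfl⟩ := four_points α hf hn hc
    rw [dist_four]
    exact lower a b c d hab hbc hcd
  exact ⟨⟨hfin, (ncard_pos hfin).2 hne, hcard, hd.trans hq.symm⟩, hq⟩
end

section
/- Let P be the Borel probability measure on ℝ with density f given by f(x) = 1/2 for x ∈ [0, 1/2] ∪ [1, 3/2], f(x) = 1 for x ∈ (1/2, 1), and f(x) = 0 otherwise. Then for every integer n ≥ 4, every optimal set α_n of n-means for P contains at least one point of the open interval (0, 1/2) and at least one point of the open interval (1/2, 3/4). -/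
open MeasureTheory Set

noncomputable def clq (y : ℝ) : ℝ := max (1 / 2) (min y 1)

def EqC (a l u : ℝ) : Prop :=
  (u - a) ^ 2 - (l - a) ^ 2 + ((clq u - a) ^ 2 - (clq l - a) ^ 2) = 0

lemma clq_cases (y : ℝ) : (y ≤ 1 / 2 ∧ clq y = 1 / 2) ∨ (1 / 2 ≤ y ∧ y ≤ 1 ∧ clq y = y) ∨
    (1 ≤ y ∧ clq y = 1) := by
  unfold clq
  rcases le_total y (1 / 2) with h | h
  · left
    exact ⟨h, max_eq_left ((min_le_left _ _).trans h)⟩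
  · rcases le_total y 1 with h1 | h1
    · right; left
      rw [min_eq_left h1]
      exact ⟨h, h1, max_eq_right h⟩
    · right; right
      rw [min_eq_right h1]
      exact ⟨h1, max_eq_right (by norm_num)⟩

lemma EqC.lt_left {a l u : ℝ} (hlu : l < u) (h : EqC a l u) : l < a := by
  unfold EqC at h
  by_contra hc
  push Not at hc
  rcases clq_cases l with ⟨h1, e1⟩ | ⟨h1, h1', e1⟩ | ⟨h1, e1⟩ <;>
  rcases clq_cases u with ⟨h2, e2⟩ | ⟨h2, h2', e2⟩ | ⟨h2, e2⟩ <;>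
  rw [e1, e2] at h <;>
  nlinarith [mul_pos (sub_pos.2 hlu) (sub_pos.2 hlu), mul_nonneg (sub_pos.2 hlu).le (sub_nonneg.2 hc)]

lemma EqC.lt_right {a l u : ℝ} (hlu : l < u) (h : EqC a l u) : a < u := by
  unfold EqC at h
  by_contra hc
  push Not at hc
  rcases clq_cases l with ⟨h1, e1⟩ | ⟨h1, h1', e1⟩ | ⟨h1, e1⟩ <;>
  rcases clq_cases u with ⟨h2, e2⟩ | ⟨h2, h2', e2⟩ | ⟨h2, e2⟩ <;>
  rw [e1, e2] at h <;>
  nlinarith [mul_pos (sub_pos.2 hlu) (sub_pos.2 hlu), mul_nonneg (sub_pos.2 hlu).le (sub_nonneg.2 hc)]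

/-- right half-width dominates beyond 1/2 -/
lemma EqC.R {a l u : ℝ} (hl : 1 / 2 ≤ l) (hlu : l < u) (h : EqC a l u) : 2 * a ≤ l + u := by
  unfold EqC at h
  by_contra hc
  push Not at hc
  have hp := mul_pos (sub_pos.2 hlu) (sub_pos.2 hc)
  rcases clq_cases l with ⟨h1, e1⟩ | ⟨h1, h1', e1⟩ | ⟨h1, e1⟩ <;>
  rcases clq_cases u with ⟨h2, e2⟩ | ⟨h2, h2', e2⟩ | ⟨h2, e2⟩ <;>
  rw [e1, e2] at h <;>
  nlinarith

lemma EqC.mid {a l u : ℝ} (hu : u ≤ 1 / 2) (hlu : l < u) (h : EqC a l u) : 2 * a = l + u := by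
  unfold EqC at h
  have e1 : clq l = 1 / 2 := by
    rcases clq_cases l with ⟨h1, e1⟩ | ⟨h1, h1', e1⟩ | ⟨h1, e1⟩ <;> linarith
  have e2 : clq u = 1 / 2 := by
    rcases clq_cases u with ⟨h1, e1⟩ | ⟨h1, h1', e1⟩ | ⟨h1, e1⟩ <;> linarith
  rw [e1, e2] at h
  have : (u - l) * (l + u - 2 * a) = 0 := by linarith
  rcases mul_eq_zero.1 this with h' | h' <;> linarith

lemma EqC.first_lt {a u : ℝ} (h0 : 0 < u) (hu : u < 3 / 2) (h : EqC a 0 u) : a < 3 / 4 := by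
  have hlt := h.lt_right h0
  unfold EqC at h
  have e1 : clq 0 = 1 / 2 := by
    rcases clq_cases 0 with ⟨h1, e1⟩ | ⟨h1, h1', e1⟩ | ⟨h1, e1⟩ <;> linarith
  by_contra hc
  push Not at hc
  rcases clq_cases u with ⟨h2, e2⟩ | ⟨h2, h2', e2⟩ | ⟨h2, e2⟩ <;>
  rw [e1, e2] at h <;> nlinarith

lemma EqC.last_gt {a l : ℝ} (h0 : 0 < l) (hl : l < 3 / 2) (h : EqC a l (3 / 2)) : 3 / 4 < a := by
  have hlt := h.lt_left hl
  unfold EqC at h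
  have e1 : clq (3 / 2) = 1 := by
    rcases clq_cases (3 / 2) with ⟨h1, e1⟩ | ⟨h1, h1', e1⟩ | ⟨h1, e1⟩ <;> linarith
  by_contra hc
  push Not at hc
  rcases clq_cases l with ⟨h2, e2⟩ | ⟨h2, h2', e2⟩ | ⟨h2, e2⟩ <;>
  rw [e1, e2] at h <;> nlinarith

lemma EqC.first_w {a u : ℝ} (h0 : 1 / 2 ≤ u) (hu : u < 3 / 2) (h : EqC a 0 u) :
    1 / 4 ≤ u - a := by
  have h3 := h.first_lt (by linarith) hu
  unfold EqC at h
  have e1 : clq 0 = 1 / 2 := by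
    rcases clq_cases 0 with ⟨h1, e1⟩ | ⟨h1, h1', e1⟩ | ⟨h1, e1⟩ <;> linarith
  by_contra hc
  push Not at hc
  rcases clq_cases u with ⟨h2, e2⟩ | ⟨h2, h2', e2⟩ | ⟨h2, e2⟩ <;>
  rw [e1, e2] at h <;> nlinarith [sq_nonneg (u - 1 / 2)]

lemma EqC.second {a l d u : ℝ} (hl : 2 * a ≤ 3 * l) (hla : l < a) (ha : a ≤ 1 / 2)
    (hd : 3 / 4 ≤ d) (hu : 2 * u = a + d) (hu2 : u ≤ 3 / 2) (h0 : 0 ≤ l) (h : EqC a l u) :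
    False := by
  unfold EqC at h
  have e1 : clq l = 1 / 2 := by
    rcases clq_cases l with ⟨h1, e1⟩ | ⟨h1, h1', e1⟩ | ⟨h1, e1⟩ <;> linarith
  have h5 : (l - a) ^ 2 ≤ (a / 3) ^ 2 := by nlinarith
  have h6 : (3 / 8 - a / 2) ^ 2 ≤ (u - a) ^ 2 := by nlinarith
  rcases clq_cases u with ⟨h2, e2⟩ | ⟨h2, h2', e2⟩ | ⟨h2, e2⟩ <;>
  rw [e1, e2] at h <;> nlinarith

lemma core (n : ℕ) (hn : 4 ≤ n) (a m : ℕ → ℝ) (h0 : m 0 = 0) (hN : m n = 3 / 2)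
    (hm : ∀ i < n, m i < m (i + 1)) (hmid : ∀ i, i + 1 < n → 2 * m (i + 1) = a i + a (i + 1))
    (hE : ∀ i < n, EqC (a i) (m i) (m (i + 1))) :
    (∃ i < n, a i ∈ Ioo (0 : ℝ) (1 / 2)) ∧ (∃ i < n, a i ∈ Ioo (1 / 2 : ℝ) (3 / 4)) := by
  have hl : ∀ i < n, m i < a i := fun i hi => (hE i hi).lt_left (hm i hi)
  have hr : ∀ i < n, a i < m (i + 1) := fun i hi => (hE i hi).lt_right (hm i hi)
  have hmono : ∀ i j, i ≤ j → j ≤ n → m i ≤ m j := by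
    intro i j hij
    induction j, hij using Nat.le_induction with
    | base => intro _; exact le_rfl
    | succ k hk ih => intro hk'; exact (ih (by omega)).trans (hm k (by omega)).le
  have hpos : ∀ i, 0 < i → i ≤ n → 0 < m i := by
    intro i hi hi'
    have := hmono 1 i hi hi'
    have := hm 0 (by omega)
    simp only [zero_add] at this
    linarith
  have hlt : ∀ i < n, m i < 3 / 2 := fun i hi => by
    have := hmono (i + 1) n hi le_rfl
    have := hm i hi
    linarith
  have E0 := hE 0 (by omega)
  rw [h0] at E0
  simp only [zero_add] at E0
  have p1 := hpos 1 (by omega) (by omega)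
  have l1 := hlt 1 (by omega)
  have a0 := hl 0 (by omega)
  have a0' := hr 0 (by omega)
  have md0 := hmid 0 (by omega)
  have md1 := hmid 1 (by omega)
  have l2 := hlt 2 (by omega)
  have l3 := hlt 3 (by omega)
  have x1 := hm 1 (by omega)
  have x2 := hm 2 (by omega)
  have E1 := hE 1 (by omega)
  have E2 := hE 2 (by omega)
  simp only [zero_add, Nat.reduceAdd] at *
  constructor
  · by_contra hc
    push Not at hc
    have ha : 1 / 2 ≤ a 0 := by
      by_contra h'
      exact hc 0 (by omega) ⟨by linarith, by linarith⟩
    have w := E0.first_w (by linarith) l1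
    have := E1.R (by linarith) x1
    have := E2.R (by linarith) x2
    linarith
  · by_contra hc
    push Not at hc
    have ha : a 0 ≤ 1 / 2 := by
      by_contra h'
      exact hc 0 (by omega) ⟨by linarith, E0.first_lt p1 l1⟩
    obtain ⟨k, hk, hak, hd⟩ : ∃ k, k + 1 < n ∧ a k ≤ 1 / 2 ∧ 3 / 4 ≤ a (k + 1) := by
      by_contra hcc
      push Not at hcc
      have : ∀ i < n, a i ≤ 1 / 2 := by
        intro i
        induction i with
        | zero => intro _; exact ha
        | succ i ih =>
          intro hi
          have h1 := hcc i hi (ih (by omega))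
          by_contra h2
          exact hc _ hi ⟨by linarith, h1⟩
      have h1 := this (n - 1) (by omega)
      have h2 := hE (n - 1) (by omega)
      rw [show n - 1 + 1 = n by omega, hN] at h2
      have := h2.last_gt (hpos _ (by omega) (by omega)) (hlt _ (by omega))
      linarith
    rcases Nat.eq_zero_or_pos k with rfl | hk0
    · simp only [zero_add] at *
      have hu : 1 / 2 ≤ m 1 := by
        by_contra h'
        have := E0.mid (by linarith) p1
        linarith
      have w := E0.first_w hu l1
      have := E1.R (by linarith) x1
      have := E2.R (by linarith) x2
      linarith
    · obtain ⟨j, rfl⟩ : ∃ j, k = j + 1 := ⟨k - 1, by omega⟩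
      have q1 := hl (j + 1) (by omega)
      have q2 := (hE j (by omega)).mid (by linarith) (hm j (by omega))
      have q3 := hmid j (by omega)
      have q4 := hmono 0 j (by omega) (by omega)
      have q5 := hmono 0 (j+1) (by omega) (by omega)
      exact (hE (j + 1) (by omega)).second (by linarith) q1 hak hd (hmid (j + 1) hk)
        (hlt _ hk).le (by linarith) 

lemma f2_eq (x : ℝ) : ENNReal.ofReal (f2 x) =
    (Icc (0 : ℝ) (3 / 2)).indicator (fun _ => ENNReal.ofReal (1 / 2)) x +
    (Ioo (1 / 2 : ℝ) 1).indicator (fun _ => ENNReal.ofReal (1 / 2)) x := by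
  unfold f2
  by_cases h : x ∈ Ioo (1 / 2 : ℝ) 1
  · have h1 : x ∈ Icc (0 : ℝ) (3 / 2) := ⟨by linarith [h.1], by linarith [h.2]⟩
    have h2 : x ∉ Icc (0 : ℝ) (1 / 2) ∪ Icc (1 : ℝ) (3 / 2) := by
      rintro (h' | h')
      · linarith [h.1, h'.2]
      · linarith [h.2, h'.1]
    rw [if_neg h2, if_pos h, indicator_of_mem h1, indicator_of_mem h,
      ← ENNReal.ofReal_add (by norm_num) (by norm_num)]
    norm_num
  · rw [indicator_of_notMem h, add_zero, if_neg h]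
    by_cases h1 : x ∈ Icc (0 : ℝ) (3 / 2)
    · have h2 : x ∈ Icc (0 : ℝ) (1 / 2) ∪ Icc (1 : ℝ) (3 / 2) := by
        rcases le_or_gt x (1 / 2) with h' | h'
        · exact Or.inl ⟨h1.1, h'⟩
        · refine Or.inr ⟨?_, h1.2⟩
          by_contra h3
          exact h ⟨h', not_le.1 h3⟩
      rw [if_pos h2, indicator_of_mem h1]
    · have h2 : x ∉ Icc (0 : ℝ) (1 / 2) ∪ Icc (1 : ℝ) (3 / 2) := by
        rintro (h' | h')
        · exact h1 ⟨h'.1, by linarith [h'.2]⟩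
        · exact h1 ⟨by linarith [h'.1], h'.2⟩
      rw [if_neg h2, indicator_of_notMem h1]
      simp

lemma P2_eq : P2 = ENNReal.ofReal (1 / 2) • (volume.restrict (Icc (0 : ℝ) (3 / 2))) +
    ENNReal.ofReal (1 / 2) • (volume.restrict (Ioo (1 / 2 : ℝ) 1)) := by
  unfold P2
  have : (fun x => ENNReal.ofReal (f2 x)) =
      (Icc (0 : ℝ) (3 / 2)).indicator (fun _ => ENNReal.ofReal (1 / 2)) +
      (Ioo (1 / 2 : ℝ) 1).indicator (fun _ => ENNReal.ofReal (1 / 2)) := by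
    funext x
    exact f2_eq x
  rw [this, withDensity_add_left (measurable_const.indicator measurableSet_Icc),
    withDensity_indicator measurableSet_Icc, withDensity_indicator measurableSet_Ioo,
    withDensity_const, withDensity_const]

lemma P2_int {g : ℝ → ℝ} (hg : Continuous g) : Integrable g P2 := by
  rw [P2_eq]
  refine Integrable.add_measure ?_ ?_
  · exact Integrable.smul_measure (hg.integrableOn_Icc) ENNReal.ofReal_ne_top
  · exact Integrable.smul_measure ((hg.integrableOn_Icc).mono_set Ioo_subset_Icc_self)
      ENNReal.ofReal_ne_top

instance P2_fin : IsFiniteMeasure P2 := by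
  refine ⟨?_⟩
  have h := (integrable_const_iff (μ := P2) (c := (1 : ℝ))).1 (P2_int continuous_const)
  rcases h with h | h
  · norm_num at h
  · exact h.measure_univ_lt_top

lemma P2_open {U : Set ℝ} (hU : IsOpen U) {c : ℝ} (hc : c ∈ U) (hc2 : c ∈ Ioo (0 : ℝ) (3 / 2)) :
    0 < P2 U := by
  rw [P2_eq]
  simp only [Measure.add_apply, Measure.smul_apply, smul_eq_mul]
  refine lt_of_lt_of_le ?_ le_self_add
  refine ENNReal.mul_pos ?_ ?_
  · simp
  · rw [Measure.restrict_apply hU.measurableSet]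
    have h1 : 0 < volume (U ∩ Ioo (0 : ℝ) (3 / 2)) :=
      (hU.inter isOpen_Ioo).measure_pos _ ⟨c, hc, hc2⟩
    exact (h1.trans_le (measure_mono (inter_subset_inter_right _ Ioo_subset_Icc_self))).ne'

lemma P2_setInt {S : Set ℝ} (hS : MeasurableSet S) {g : ℝ → ℝ} (hg : Continuous g) :
    ∫ x in S, g x ∂P2 = 1 / 2 * (∫ x in S ∩ Icc 0 (3 / 2), g x) +
      1 / 2 * (∫ x in S ∩ Ioo (1 / 2) 1, g x) := by
  rw [P2_eq, Measure.restrict_add, Measure.restrict_smul, Measure.restrict_smul,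
    Measure.restrict_restrict hS, Measure.restrict_restrict hS, integral_add_measure,
    integral_smul_measure, integral_smul_measure]
  · simp
  · exact Integrable.smul_measure ((hg.integrableOn_Icc).mono_set inter_subset_right)
      ENNReal.ofReal_ne_top
  · exact Integrable.smul_measure ((hg.integrableOn_Icc).mono_set
      (inter_subset_right.trans Ioo_subset_Icc_self)) ENNReal.ofReal_ne_top

lemma P2_cell {S : Set ℝ} (hS : MeasurableSet S) {l u a : ℝ} (hl : 0 ≤ l) (hlu : l ≤ u)
    (hu : u ≤ 3 / 2) (hSI : S ∩ Icc 0 (3 / 2) = Icc l u) (h : ∫ x in S, (x - a) ∂P2 = 0) :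
    EqC a l u := by
  have key : ∀ p q : ℝ, p ≤ q → ∫ x in Ioo p q, (x - a) = ((q - a) ^ 2 - (p - a) ^ 2) / 2 := by
    intro p q hpq
    rw [← integral_Ioc_eq_integral_Ioo, ← intervalIntegral.integral_of_le hpq]
    rw [intervalIntegral.integral_sub (by simp) (by simp)]
    simp
    ring
  rw [P2_setInt hS (by fun_prop), hSI] at h
  have h2 : S ∩ Ioo (1 / 2) 1 = Icc l u ∩ Ioo (1 / 2) 1 := by
    rw [← hSI, inter_assoc]
    congr 1
    rw [inter_eq_right.2]
    intro x hx
    exact ⟨by linarith [hx.1], by linarith [hx.2]⟩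
  have h3 : (Icc l u ∩ Ioo (1 / 2) 1 : Set ℝ) =ᵐ[volume] Ioo (clq l) (clq u) := by
    have : (Icc l u ∩ Ioo (1 / 2) 1 : Set ℝ) =ᵐ[volume] (Ioo l u ∩ Ioo (1 / 2) 1 : Set ℝ) :=
      Ioo_ae_eq_Icc.symm.inter (Filter.EventuallyEq.refl _ _)
    suffices heq : (Ioo l u ∩ Ioo (1 / 2) 1 : Set ℝ) = Ioo (clq l) (clq u) by
      rw [← heq]
      exact this
    ext x
    simp only [mem_inter_iff, mem_Ioo, clq, max_lt_iff, lt_max_iff, min_lt_iff, lt_min_iff]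
    constructor
    · rintro ⟨⟨h1, h2⟩, h3, h4⟩
      exact ⟨⟨h3, Or.inl h1⟩, Or.inr ⟨h2, h4⟩⟩
    · rintro ⟨⟨h1, h2⟩, h3⟩
      have h3 : x < u ∧ x < 1 := h3.resolve_left (by linarith)
      exact ⟨⟨h2.resolve_right (by linarith), h3.1⟩, h1, h3.2⟩
  rw [h2, setIntegral_congr_set h3, integral_Icc_eq_integral_Ioo, key _ _ hlu, key] at h
  · unfold EqC
    linarith
  · unfold clq
    exact max_le_max le_rfl (min_le_min hlu le_rfl)

noncomputable def gq (α : Set ℝ) (x : ℝ) : ℝ := sInf ((fun a => (x - a) ^ 2) '' α)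

lemma gq_le {α : Set ℝ} {x b : ℝ} (hb : b ∈ α) : gq α x ≤ (x - b) ^ 2 :=
  csInf_le ⟨0, by rintro _ ⟨a, _, rfl⟩; positivity⟩ ⟨b, hb, rfl⟩

lemma gq_nonneg {α : Set ℝ} {x : ℝ} : 0 ≤ gq α x :=
  Real.sInf_nonneg (by rintro _ ⟨a, _, rfl⟩; positivity)

lemma gq_mem {α : Set ℝ} (hf : α.Finite) (hne : α.Nonempty) (x : ℝ) :
    ∃ a ∈ α, gq α x = (x - a) ^ 2 := by
  obtain ⟨a, ha, h⟩ := (hne.image (fun a => (x - a) ^ 2)).csInf_mem (hf.image _)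
  exact ⟨a, ha, h.symm⟩

lemma gq_cont {α : Set ℝ} (hf : α.Finite) (hne : α.Nonempty) : Continuous (gq α) := by
  have : gq α = fun x => (Metric.infDist x α) ^ 2 := by
    funext x
    obtain ⟨a, ha, h⟩ := gq_mem hf hne x
    obtain ⟨b, hb, h'⟩ := hf.isCompact.exists_infDist_eq_dist hne x
    apply le_antisymm
    · rw [h', Real.dist_eq, sq_abs]
      exact gq_le hb
    · rw [h, ← sq_abs (x - a), ← Real.dist_eq]
      exact pow_le_pow_left₀ Metric.infDist_nonneg (Metric.infDist_le_dist_of_mem ha) 2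
  rw [this]
  exact (Metric.continuous_infDist_pt α).pow 2

lemma gq_anti {α β : Set ℝ} (hf : α.Finite) (hne : α.Nonempty) (h : α ⊆ β) (x : ℝ) :
    gq β x ≤ gq α x := by
  obtain ⟨a, ha, e⟩ := gq_mem hf hne x
  rw [e]
  exact gq_le (h ha)

lemma improve {β : Set ℝ} (hf : β.Finite) (hne : β.Nonempty) :
    ∃ c, distortion P2 (insert c β) < distortion P2 β := by
  obtain ⟨c, hc, hcβ⟩ := ((Ioo_infinite (show (0 : ℝ) < 3 / 2 by norm_num)).sdiff hf).nonempty
  refine ⟨c, ?_⟩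
  have c1 := gq_cont hf hne
  have c2 := gq_cont (hf.insert c) (insert_nonempty c β)
  have hpos : 0 < ∫ x, (gq β x - gq (insert c β) x) ∂P2 := by
    rw [integral_pos_iff_support_of_nonneg]
    · refine P2_open (c1.sub c2).isOpen_support (c := c) ?_ hc
      have h1 : gq (insert c β) c ≤ 0 := by
        have := gq_le (x := c) (mem_insert c β)
        simpa using this
      obtain ⟨b, hb, e⟩ := gq_mem hf hne c
      have : c - b ≠ 0 := fun h => hcβ (by rw [sub_eq_zero.1 h]; exact hb)
      have : 0 < (c - b) ^ 2 := by positivity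
      rw [Function.mem_support]
      rw [← e] at this
      linarith
    · intro x
      have := gq_anti hf hne (subset_insert c β) x
      simp only [Pi.zero_apply]
      linarith
    · exact P2_int (c1.sub c2)
  rw [integral_sub (P2_int c1) (P2_int c2)] at hpos
  exact sub_pos.1 hpos

def cellq (α : Set ℝ) (a : ℝ) : Set ℝ := {x | ∀ b ∈ α, (x - a) ^ 2 ≤ (x - b) ^ 2}

lemma cellq_meas (α : Set ℝ) (a : ℝ) : MeasurableSet (cellq α a) := by
  have : IsClosed (cellq α a) := by
    have : cellq α a = ⋂ b ∈ α, {x | (x - a) ^ 2 ≤ (x - b) ^ 2} := by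
      ext x; simp [cellq]
    rw [this]
    exact isClosed_biInter fun b _ => isClosed_le (by fun_prop) (by fun_prop)
  exact this.measurableSet

section
variable {n : ℕ} {α : Set ℝ}

lemma opt_le (h : IsOptimal P2 n α) {β : Set ℝ} (hf : β.Finite) (hne : β.Nonempty)
    (hc : β.ncard ≤ n) : distortion P2 α ≤ distortion P2 β := by
  rw [h.2.2.2]
  refine csInf_le ⟨0, ?_⟩ ⟨β, hf, hne, hc, rfl⟩
  rintro _ ⟨γ, _, _, _, rfl⟩
  exact integral_nonneg fun x => gq_nonneg

lemma opt_card (h : IsOptimal P2 n α) : α.ncard = n := by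
  by_contra hc
  have hlt : α.ncard < n := lt_of_le_of_ne h.2.2.1 hc
  obtain ⟨c, hi⟩ := improve h.1 (nonempty_of_ncard_ne_zero (by have := h.2.1; omega))
  have := opt_le h (h.1.insert c) (insert_nonempty _ _) ((ncard_insert_le c α).trans hlt)
  linarith

lemma opt_pos (hn : 4 ≤ n) (h : IsOptimal P2 n α) {a : ℝ} (ha : a ∈ α) :
    P2 (cellq α a) ≠ 0 := by
  intro h0
  have hcard := opt_card h
  have hf : (α \ {a}).Finite := h.1.subset sdiff_subset
  have hd : (α \ {a}).ncard + 1 = α.ncard := ncard_sdiff_singleton_add_one ha h.1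
  have hne : (α \ {a}).Nonempty := nonempty_of_ncard_ne_zero (by omega)
  have hD : distortion P2 (α \ {a}) = distortion P2 α := by
    refine integral_congr_ae ?_
    have : ∀ᵐ x ∂P2, x ∉ cellq α a := measure_eq_zero_iff_ae_notMem.1 h0
    filter_upwards [this] with x hx
    change gq (α \ {a}) x = gq α x
    apply le_antisymm _ (gq_anti hf hne sdiff_subset x)
    obtain ⟨b, hb, e⟩ := gq_mem h.1 ⟨a, ha⟩ x
    rw [e]
    refine gq_le ⟨hb, ?_⟩
    rintro rfl
    exact hx fun b' hb' => e ▸ gq_le hb'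
  obtain ⟨c, hi⟩ := improve hf hne
  have := opt_le h (hf.insert c) (insert_nonempty _ _) ((ncard_insert_le c _).trans (by omega))
  linarith

lemma opt_cell (h : IsOptimal P2 n α) {a : ℝ} (ha : a ∈ α) (c : ℝ) :
    ∫ x in cellq α a, (x - a) ^ 2 ∂P2 ≤ ∫ x in cellq α a, (x - c) ^ 2 ∂P2 := by
  set S := cellq α a with hS
  have hSm : MeasurableSet S := cellq_meas α a
  have hd : (α \ {a}).ncard + 1 = α.ncard := ncard_sdiff_singleton_add_one ha h.1
  have hf : (insert c (α \ {a})).Finite := (h.1.subset sdiff_subset).insert c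
  have hle := opt_le h hf (insert_nonempty _ _)
    ((ncard_insert_le c _).trans (by have := h.2.2.1; omega))
  have c1 := gq_cont h.1 ⟨a, ha⟩
  have c2 := gq_cont hf (insert_nonempty _ _)
  change ∫ x, gq α x ∂P2 ≤ ∫ x, gq (insert c (α \ {a})) x ∂P2 at hle
  rw [← integral_add_compl hSm (P2_int c1), ← integral_add_compl hSm (P2_int c2)] at hle
  have e1 : ∫ x in S, gq α x ∂P2 = ∫ x in S, (x - a) ^ 2 ∂P2 := by
    refine setIntegral_congr_fun hSm fun x hx => ?_
    apply le_antisymm (gq_le ha)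
    obtain ⟨b, hb, e⟩ := gq_mem h.1 ⟨a, ha⟩ x
    simp only [e]
    exact hx b hb
  have e2 : ∫ x in S, gq (insert c (α \ {a})) x ∂P2 ≤ ∫ x in S, (x - c) ^ 2 ∂P2 :=
    setIntegral_mono_on (P2_int c2).integrableOn (P2_int (by fun_prop)).integrableOn hSm
      fun x _ => gq_le (mem_insert _ _)
  have e3 : ∫ x in Sᶜ, gq (insert c (α \ {a})) x ∂P2 ≤ ∫ x in Sᶜ, gq α x ∂P2 := by
    refine setIntegral_mono_on (P2_int c2).integrableOn (P2_int c1).integrableOn hSm.compl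
      fun x hx => ?_
    obtain ⟨b, hb, e⟩ := gq_mem h.1 ⟨a, ha⟩ x
    rw [e]
    refine gq_le (mem_insert_of_mem _ ⟨hb, ?_⟩)
    rintro rfl
    exact hx fun b' hb' => e ▸ gq_le hb'
  linarith

lemma opt_centroid (h : IsOptimal P2 n α) {a : ℝ} (ha : a ∈ α) :
    ∫ x in cellq α a, (x - a) ∂P2 = 0 := by
  set S := cellq α a
  set I := ∫ x in S, (x - a) ∂P2 with hI
  set p := ∫ _x in S, (1 : ℝ) ∂P2 with hp
  have hp0 : 0 ≤ p := integral_nonneg fun _ => zero_le_one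
  have key : ∀ t : ℝ, 0 ≤ 2 * t * I + t ^ 2 * p := by
    intro t
    have h1 := opt_cell h ha (a - t)
    have : ∫ x in S, (x - (a - t)) ^ 2 ∂P2 =
        ∫ x in S, (x - a) ^ 2 ∂P2 + (2 * t * I + t ^ 2 * p) := by
      have i1 : Integrable (fun x : ℝ => (x - a) ^ 2) (P2.restrict S) :=
        (P2_int (by fun_prop)).integrableOn
      have i2 : Integrable (fun x : ℝ => 2 * t * (x - a)) (P2.restrict S) :=
        (P2_int (by fun_prop)).integrableOn
      have i3 : Integrable (fun x : ℝ => t ^ 2 * (1 : ℝ)) (P2.restrict S) :=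
        (P2_int (by fun_prop)).integrableOn
      rw [hI, hp, ← integral_const_mul, ← integral_const_mul, ← integral_add i2 i3]
      have i4 : Integrable (fun x : ℝ => 2 * t * (x - a) + t ^ 2 * (1 : ℝ)) (P2.restrict S) :=
        i2.add i3
      rw [← integral_add i1 i4]
      refine integral_congr_ae (Filter.Eventually.of_forall fun x => ?_)
      ring
    rw [this] at h1
    linarith
  have h2 := key (-I / (p + 1))
  have hp1 : 0 < p + 1 := by linarith
  have e : 2 * (-I / (p + 1)) * I + (-I / (p + 1)) ^ 2 * p = -(I ^ 2 * (p + 2)) / (p + 1) ^ 2 := by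
    field_simp
    ring
  rw [e, le_div_iff₀ (by positivity)] at h2
  by_contra hne
  have : 0 < I ^ 2 * (p + 2) := by positivity
  linarith

end

theorem stmt_10 (n : ℕ) (hn : 4 ≤ n) (α : Set ℝ) (hα : IsOptimal P2 n α) :
    (∃ x ∈ α, x ∈ Ioo (0 : ℝ) (1 / 2)) ∧ (∃ x ∈ α, x ∈ Ioo (1 / 2 : ℝ) (3 / 4)) := by
  have hcard := opt_card hα
  have hcard' : hα.1.toFinset.card = n := 
    (ncard_eq_toFinset_card α hα.1).symm.trans hcard
  set e := hα.1.toFinset.orderEmbOfFin hcard' with he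
  have hrange : range e = α := by
    rw [he, Finset.range_orderEmbOfFin]; simp
  set a : ℕ → ℝ := fun i => if h : i < n then e ⟨i, h⟩ else 0 with hadef
  have ha : ∀ i < n, a i ∈ α := by
    intro i hi
    simp only [hadef, dif_pos hi]
    rw [← hrange]
    exact mem_range_self _
  have hsurj : ∀ b ∈ α, ∃ i < n, a i = b := by
    intro b hb
    rw [← hrange] at hb
    obtain ⟨i, rfl⟩ := hb
    exact ⟨i, i.2, by simp only [hadef, dif_pos i.2]⟩
  have hmono : ∀ i j, i < j → j < n → a i < a j := by
    intro i j hij hj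
    simp only [hadef, dif_pos hj, dif_pos (hij.trans hj)]
    exact e.strictMono hij
  have hmonole : ∀ i j, i ≤ j → j < n → a i ≤ a j := by
    intro i j hij hj
    rcases hij.eq_or_lt with rfl | h
    · exact le_rfl
    · exact (hmono i j h hj).le
  set m : ℕ → ℝ := fun i => if i = 0 then 0 else if i < n then (a (i - 1) + a i) / 2 else 3 / 2
    with hmdef
  have h0 : m 0 = 0 := by simp [hmdef]
  have hN : m n = 3 / 2 := by
    simp only [hmdef]
    rw [if_neg (by omega), if_neg (by omega)]
  have hmid : ∀ i, i + 1 < n → 2 * m (i + 1) = a i + a (i + 1) := by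
    intro i hi
    simp only [hmdef]
    rw [if_neg (by omega), if_pos hi]
    simp only [Nat.add_sub_cancel]
    ring
  -- membership in cells
  have hcell : ∀ i < n, ∀ x, x ∈ cellq α (a i) ↔
      ((0 < i → m i ≤ x) ∧ (i + 1 < n → x ≤ m (i + 1))) := by
    intro i hi x
    constructor
    · intro hx
      constructor
      · intro hi0
        obtain ⟨j, rfl⟩ : ∃ j, i = j + 1 := ⟨i - 1, by omega⟩
        have h1 := hx (a j) (ha j (by omega))
        have h2 := hmono j (j + 1) (by omega) hi
        have h3 := hmid j hi
        nlinarith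
      · intro hi1
        have h1 := hx (a (i + 1)) (ha _ hi1)
        have h2 := hmono i (i + 1) (by omega) hi1
        have h3 := hmid i hi1
        nlinarith
    · rintro ⟨hx1, hx2⟩ b hb
      obtain ⟨j, hj, rfl⟩ := hsurj b hb
      rcases lt_trichotomy j i with h | rfl | h
      · obtain ⟨k, rfl⟩ : ∃ k, i = k + 1 := ⟨i - 1, by omega⟩
        have h1 := hx1 (by omega)
        have h2 := hmono j (k + 1) h hi
        have h3 := hmid k hi
        have h4 := hmonole j k (by omega) (by omega)
        nlinarith
      · exact le_rfl
      · have h1 := hx2 (by omega)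
        have h2 := hmono i j h hj
        have h3 := hmid i (by omega)
        have h4 := hmonole (i + 1) j h hj
        nlinarith
  have hpt : ∀ i < n, ∃ x y, x < y ∧ x ∈ cellq α (a i) ∩ Icc 0 (3 / 2) ∧
      y ∈ cellq α (a i) ∩ Icc 0 (3 / 2) := by
    intro i hi
    by_contra hc
    push Not at hc
    have hss : (cellq α (a i) ∩ Icc 0 (3 / 2)).Subsingleton := by
      intro x hx y hy
      rcases lt_trichotomy x y with h | h | h
      · exact absurd hy (hc x y h hx)
      · exact h
      · exact absurd hx (hc y x h hy)
    apply opt_pos hn hα (ha i hi)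
    have hv := hss.measure_zero volume
    rw [P2_eq]
    simp only [Measure.add_apply, Measure.smul_apply, smul_eq_mul,
      Measure.restrict_apply (cellq_meas α (a i))]
    have hv2 : volume (cellq α (a i) ∩ Ioo (1 / 2) 1) = 0 := by
      refine measure_mono_null (inter_subset_inter_right _ ?_) hv
      intro x hx
      exact ⟨by linarith [hx.1], by linarith [hx.2]⟩
    rw [hv, hv2]
    simp
  have hmpos : 0 < m 1 := by
    obtain ⟨x, y, hxy, hx, hy⟩ := hpt 0 (by omega)
    have h1 := ((hcell 0 (by omega) y).1 hy.1).2 (by omega)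
    have h2 := hx.2.1
    simp only [zero_add] at h1
    linarith
  have hmlt : m (n - 1) < 3 / 2 := by
    obtain ⟨x, y, hxy, hx, hy⟩ := hpt (n - 1) (by omega)
    have h1 := ((hcell (n - 1) (by omega) x).1 hx.1).1 (by omega)
    have h2 := hy.2.2
    linarith
  have hm : ∀ i < n, m i < m (i + 1) := by
    intro i hi
    rcases Nat.eq_zero_or_pos i with rfl | hi0
    · rw [h0]; exact hmpos
    · by_cases hi1 : i + 1 < n
      · obtain ⟨j, rfl⟩ : ∃ j, i = j + 1 := ⟨i - 1, by omega⟩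
        have := hmid j hi
        have := hmid (j + 1) hi1
        have := hmono j (j + 1 + 1) (by omega) hi1
        linarith
      · have h1 : i = n - 1 := by omega
        have h2 : i + 1 = n := by omega
        rw [h2, hN, h1]
        exact hmlt
  have hmm : ∀ i j, i ≤ j → j ≤ n → m i ≤ m j := by
    intro i j hij
    induction j, hij using Nat.le_induction with
    | base => intro _; exact le_rfl
    | succ k hk ih => intro hk'; exact (ih (by omega)).trans (hm k (by omega)).le
  have hE : ∀ i < n, EqC (a i) (m i) (m (i + 1)) := by
    intro i hi
    have b1 : 0 ≤ m i := h0 ▸ hmm 0 i (by omega) hi.le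
    have b2 : m (i + 1) ≤ 3 / 2 := hN ▸ hmm (i + 1) n hi le_rfl
    refine P2_cell (cellq_meas α (a i)) b1 (hm i hi).le b2 ?_ (opt_centroid hα (ha i hi))
    ext x
    rw [mem_inter_iff, hcell i hi]
    constructor
    · rintro ⟨⟨h1, h2⟩, h3, h4⟩
      constructor
      · rcases Nat.eq_zero_or_pos i with rfl | hi0
        · rw [h0]; exact h3
        · exact h1 hi0
      · by_cases hi1 : i + 1 < n
        · exact h2 hi1
        · rw [show i + 1 = n by omega, hN]; exact h4
    · rintro ⟨h1, h2⟩
      exact ⟨⟨fun _ => h1, fun _ => h2⟩, b1.trans h1, h2.trans b2⟩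
  obtain ⟨⟨i, hi, h1⟩, ⟨j, hj, h2⟩⟩ := core n hn a m h0 hN hm hmid hE
  exact ⟨⟨a i, ha i hi, h1⟩, ⟨a j, ha j hj, h2⟩⟩
end
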